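/- Let p ≥ 6, u = 2^(1−p), and let o_x, o_y ∈ [1, 1/(8u) − 2]. Let x_h, x_l, y_h, y_l ∈ F_p satisfy |x_l| ≤ o_x·u·|x_h| and |y_l| ≤ o_y·u·|y_h|, and suppose r(x_h, y_h) < 1/2. Then in any execution of accurate double-word addition in faithful rounding, the intermediate values satisfy |w| ≤ |v_h|. -/

import Mathlib

/-- The radix-2, precision-`p` floating-point numbers with unlimited exponent range. -/
def Fp (p : ℕ) : Set ℝ := {x : ℝ | ∃ M e : ℤ, |M| ≤ 2 ^ p - 1 ∧ x = (M : ℝ) * (2 : ℝ) ^ e}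

/-- Round toward `-∞`: the largest floating-point number `≤ x`. -/
noncomputable def RD (p : ℕ) (x : ℝ) : ℝ := sSup {f : ℝ | f ∈ Fp p ∧ f ≤ x}

/-- Round toward `+∞`: the smallest floating-point number `≥ x`. -/
noncomputable def RU (p : ℕ) (x : ℝ) : ℝ := sInf {f : ℝ | f ∈ Fp p ∧ x ≤ f}

/-- `y` is a faithful rounding of `x`. -/
def Faithful (p : ℕ) (x y : ℝ) : Prop := y = RD p x ∨ y = RU p x

/-- `r(x,y)`: the extent of cancellation when adding `x` and `y`. -/
noncomputable def cancelRatio (x y : ℝ) : ℝ :=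
  if x * y < 0 then min |x| |y| / max |x| |y| else 0

/-- All hypotheses of one execution of the accurate double-word addition algorithm
(`(s_h,s_l) = 2Sum(x_h,y_h)`, `(t_h,t_l) = 2Sum(x_l,y_l)`, `c = ∘(s_l+t_h)`,
`(v_h,v_l) = Fast2Sum(s_h,c)`, `w = ∘(t_l+v_l)`, `(z_h,z_l) = Fast2Sum(v_h,w)`)
in faithful rounding, each rounding chosen independently. -/
def AccurateFaithful (p : ℕ) (xh xl yh yl sh a1 b1 da1 db1 sl th a2 b2 da2 db2 tl
    c vh d1 vl w zh d2 zl : ℝ) : Prop :=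
  Faithful p (xh + yh) sh ∧ Faithful p (sh - yh) a1 ∧ Faithful p (sh - a1) b1 ∧
  Faithful p (xh - a1) da1 ∧ Faithful p (yh - b1) db1 ∧ Faithful p (da1 + db1) sl ∧
  Faithful p (xl + yl) th ∧ Faithful p (th - yl) a2 ∧ Faithful p (th - a2) b2 ∧
  Faithful p (xl - a2) da2 ∧ Faithful p (yl - b2) db2 ∧ Faithful p (da2 + db2) tl ∧
  Faithful p (sl + th) c ∧
  Faithful p (sh + c) vh ∧ Faithful p (vh - sh) d1 ∧ Faithful p (c - d1) vl ∧
  Faithful p (tl + vl) w ∧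
  Faithful p (vh + w) zh ∧ Faithful p (zh - vh) d2 ∧ Faithful p (w - d2) zl

/-!
Only the relative error of the roundings matters, never the exactness of the error-free transforms:
relative errors up to `1 / 16` are small enough.

Put `S = |x_h + y_h|`. Mild cancellation gives `|x_h| + |y_h| ≤ 3 S`, hence
`max |x_h| |y_h| ≤ 2 S`, and the low words are at most `1 / 8` of the high words. In a `2Sum` whose
operations all carry a relative error `ε`, the error made in computing `a'` cancels out of the
second output, which is therefore of size `ε (max |a| |b| + |a + b|)` up to higher order terms.
So `c` stays below `7 S / 10` while `s_h` is at least `15 S / 16`, which keeps `V = |s_h + c|` away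
from `0`. Finally `t_l` and `v_l` are pure error terms, bounded by small multiples of `S` and `V`,
and so is `w`.
-/

/-- The standard model of floating-point arithmetic: `R x y`, read as: `y` is an admissible result
of rounding `x`, allows relative errors up to `ε` only. Roundings are relations rather than
functions so that each operation of an algorithm may be rounded independently. -/
def HasRelError (R : ℝ → ℝ → Prop) (ε : ℝ) : Prop :=
  ∀ ⦃x y : ℝ⦄, R x y → |y - x| ≤ ε * |x|

/-- `(s, t)` is a possible result of Knuth's algorithm `2Sum(a, b)` with operations rounded
by `R`. -/
def TwoSum (R : ℝ → ℝ → Prop) (a b s t : ℝ) : Prop :=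
  R (a + b) s ∧ ∃ a' b' da db : ℝ,
    R (s - b) a' ∧ R (s - a') b' ∧ R (a - a') da ∧ R (b - b') db ∧ R (da + db) t

/-- `(s, t)` is a possible result of Dekker's algorithm `Fast2Sum(a, b)` with operations rounded
by `R`. The usual precondition `|b| ≤ |a|` is not part of the notion. -/
def FastTwoSum (R : ℝ → ℝ → Prop) (a b s t : ℝ) : Prop :=
  R (a + b) s ∧ ∃ d : ℝ, R (s - a) d ∧ R (b - d) t

/-- The unit in the last place of `x` in precision `p`: the spacing of `Fp p` in the binade
`[2 ^ e, 2 ^ (e + 1))` of `|x|`. At `x = 0`, which has no binade, `Int.log` makes it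
`2 ^ (1 - p)`. -/
noncomputable def ulp (p : ℕ) (x : ℝ) : ℝ := 2 ^ (Int.log 2 |x| + 1 - p)

section Faithful

variable {p : ℕ} {x y : ℝ}

lemma ulp_pos : 0 < ulp p x := by
  unfold ulp
  positivity

lemma abs_lt_two_pow_mul_ulp : |x| < 2 ^ p * ulp p x := by
  have hlt : |x| < 2 ^ (Int.log 2 |x| + 1) := Int.lt_zpow_succ_log_self one_lt_two |x|
  rwa [ulp, ← zpow_natCast, ← zpow_add₀ two_ne_zero, add_sub_cancel]

lemma ulp_le_mul_abs (hx : x ≠ 0) : ulp p x ≤ 2 ^ (1 - (p : ℤ)) * |x| := by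
  have hle : (2 : ℝ) ^ Int.log 2 |x| ≤ |x| := Int.zpow_log_le_self one_lt_two (abs_pos.mpr hx)
  calc ulp p x = 2 ^ (1 - (p : ℤ)) * 2 ^ Int.log 2 |x| := by
        rw [ulp, ← zpow_add₀ two_ne_zero]
        ring_nf
    _ ≤ 2 ^ (1 - (p : ℤ)) * |x| := by gcongr

lemma neg_mem_Fp (hx : x ∈ Fp p) : -x ∈ Fp p := by
  obtain ⟨M, e, hM, rfl⟩ := hx
  exact ⟨-M, e, by rwa [abs_neg], by push_cast; ring⟩

lemma zpow_mem_Fp (hp : 1 ≤ p) (k : ℤ) : (2 : ℝ) ^ k ∈ Fp p := by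
  have htwo : (2 : ℤ) ^ 1 ≤ 2 ^ p := pow_le_pow_right₀ one_le_two hp
  exact ⟨1, k, by rw [abs_one]; linarith, by simp⟩

/-- The bound `2 ^ p`, not a legal significand, covers rounding up to the next binade. -/
lemma mul_zpow_mem_Fp (hp : 1 ≤ p) {M : ℤ} (hM : |M| ≤ 2 ^ p) (k : ℤ) :
    (M : ℝ) * 2 ^ k ∈ Fp p := by
  obtain hlt | heq := hM.lt_or_eq
  · exact ⟨M, k, Int.le_sub_one_of_lt hlt, rfl⟩
  · have hpow : (2 : ℝ) ^ p * 2 ^ k ∈ Fp p := by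
      rw [← zpow_natCast, ← zpow_add₀ two_ne_zero]
      exact zpow_mem_Fp hp _
    obtain rfl | rfl := eq_or_eq_neg_of_abs_eq heq
    · exact_mod_cast hpow
    · have hneg : -((2 : ℝ) ^ p * 2 ^ k) ∈ Fp p := neg_mem_Fp hpow
      rwa [Int.cast_neg, neg_mul, Int.cast_pow, Int.cast_ofNat]

lemma floor_mul_ulp_mem_Fp (hp : 1 ≤ p) : ⌊x / ulp p x⌋ * ulp p x ∈ Fp p := by
  have habs : |x / ulp p x| < 2 ^ p := by
    rw [abs_div, abs_of_pos ulp_pos, div_lt_iff₀ ulp_pos]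
    exact abs_lt_two_pow_mul_ulp
  have hfloor : |⌊x / ulp p x⌋| ≤ 2 ^ p := by
    refine abs_le.mpr ⟨Int.le_floor.mpr ?_, ?_⟩
    · exact_mod_cast (abs_lt.mp habs).1.le
    · exact_mod_cast (Int.floor_le _).trans (abs_lt.mp habs).2.le
  exact mul_zpow_mem_Fp hp hfloor _

lemma ceil_mul_ulp_mem_Fp (hp : 1 ≤ p) : ⌈x / ulp p x⌉ * ulp p x ∈ Fp p := by
  have hmem : -(⌊-x / ulp p (-x)⌋ * ulp p (-x)) ∈ Fp p := neg_mem_Fp (floor_mul_ulp_mem_Fp hp)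
  have hulp : ulp p (-x) = ulp p x := by rw [ulp, ulp, abs_neg]
  rwa [hulp, neg_div, Int.floor_neg, Int.cast_neg, neg_mul, neg_neg] at hmem

lemma Faithful.mem_Icc {f g : ℝ} (h : Faithful p x y) (hf : f ∈ Fp p) (hg : g ∈ Fp p)
    (hfx : f ≤ x) (hxg : x ≤ g) : y ∈ Set.Icc f g := by
  obtain rfl | rfl := h
  · have hge : f ≤ RD p x := le_csSup ⟨x, fun _ h ↦ h.2⟩ ⟨hf, hfx⟩
    have hle : RD p x ≤ x := csSup_le ⟨f, hf, hfx⟩ fun _ h ↦ h.2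
    exact ⟨hge, hle.trans hxg⟩
  · have hge : x ≤ RU p x := le_csInf ⟨g, hg, hxg⟩ fun _ h ↦ h.2
    have hle : RU p x ≤ g := csInf_le ⟨x, fun _ h ↦ h.2⟩ ⟨hg, hxg⟩
    exact ⟨hfx.trans hge, hle⟩

lemma Faithful.abs_sub_le_ulp (hp : 1 ≤ p) (h : Faithful p x y) : |y - x| ≤ ulp p x := by
  have hfloor_le : ⌊x / ulp p x⌋ * ulp p x ≤ x := (le_div_iff₀ ulp_pos).mp (Int.floor_le _)
  have hlt_floor : x < (⌊x / ulp p x⌋ + 1) * ulp p x :=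
    (div_lt_iff₀ ulp_pos).mp (Int.lt_floor_add_one _)
  have hle_ceil : x ≤ ⌈x / ulp p x⌉ * ulp p x := (div_le_iff₀ ulp_pos).mp (Int.le_ceil _)
  have hceil_lt : (⌈x / ulp p x⌉ - 1) * ulp p x < x :=
    (lt_div_iff₀ ulp_pos).mp (sub_lt_iff_lt_add.mpr (Int.ceil_lt_add_one _))
  obtain ⟨hfloor_y, hy_ceil⟩ :=
    h.mem_Icc (floor_mul_ulp_mem_Fp hp) (ceil_mul_ulp_mem_Fp hp) hfloor_le hle_ceil
  exact abs_le.mpr ⟨by linarith, by linarith⟩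

theorem hasRelError_faithful (hp : 1 ≤ p) : HasRelError (Faithful p) (2 ^ (1 - (p : ℤ))) := by
  intro x y h
  obtain rfl | hx := eq_or_ne x 0
  · have hzero : (0 : ℝ) ∈ Fp p := ⟨0, 0, by simp [one_le_pow₀], by simp⟩
    have hy : y = 0 := by simpa using h.mem_Icc hzero hzero le_rfl le_rfl
    simp [hy]
  · exact (h.abs_sub_le_ulp hp).trans (ulp_le_mul_abs hx)

end Faithful

section StandardModel

variable {R : ℝ → ℝ → Prop} {ε a b s t x y : ℝ}

lemma HasRelError.mono {ε' : ℝ} (hR : HasRelError R ε) (hε : ε ≤ ε') : HasRelError R ε' :=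
  fun _ _ h ↦ (hR h).trans (by gcongr)

lemma HasRelError.abs_sub_le_of_eq_sub {v w V W : ℝ} (hR : HasRelError R ε) (hε : 0 ≤ ε)
    (h : R x y) (hx : x = v - w) (hv : |v| ≤ V) (hw : |w| ≤ W) : |y - x| ≤ ε * (V + W) := by
  have hxVW : |x| ≤ V + W := hx ▸ (abs_sub v w).trans (add_le_add hv hw)
  exact (hR h).trans (by gcongr)

lemma HasRelError.abs_le (hR : HasRelError R ε) (h : R x y) : |y| ≤ (1 + ε) * |x| := by
  linarith [hR h, abs_sub_abs_le_abs_sub y x]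

lemma HasRelError.le_abs (hR : HasRelError R ε) (h : R x y) : (1 - ε) * |x| ≤ |y| := by
  linarith [hR h, abs_sub_abs_le_abs_sub x y, abs_sub_comm x y]

theorem TwoSum.abs_snd_le (hR : HasRelError R ε) (hε : 0 ≤ ε) (h : TwoSum R a b s t) :
    |t| ≤ ε * (1 + ε) ^ 5 * (max |a| |b| + |a + b|) := by
  obtain ⟨hs, a', b', da, db, ha', hb', hda, hdb, ht⟩ := h
  set A := max |a| |b|
  set B := |a + b|
  have ha : |a| ≤ A := le_max_left _ _
  have hb : |b| ≤ A := le_max_right _ _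
  have es : |a + b - s| ≤ ε * B := by rw [abs_sub_comm]; exact hR hs
  have ea' : |a' - (s - b)| ≤ ε * (A + ε * B) :=
    hR.abs_sub_le_of_eq_sub hε ha' (by ring) ha es
  have eb' : |b' - (s - a')| ≤ ε * (A + ε * (A + ε * B)) :=
    hR.abs_sub_le_of_eq_sub hε hb' (by ring) hb ea'
  have eda : |da - (a - a')| ≤ ε * (ε * B + ε * (A + ε * B)) :=
    hR.abs_sub_le_of_eq_sub hε hda (by ring) es ea'
  have edb : |db - (b - b')| ≤ ε * (ε * (A + ε * B) + ε * (A + ε * (A + ε * B))) :=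
    hR.abs_sub_le_of_eq_sub hε hdb (by ring) ea' eb'
  -- The error of `a'` enters `a - a'` and `b - b'` with opposite signs and drops out.
  have hsum : da + db =
      (da - (a - a')) + (db - (b - b')) + (a + b - s) - (b' - (s - a')) := by ring
  have htri : |da + db| ≤
      |da - (a - a')| + |db - (b - b')| + |a + b - s| + |b' - (s - a')| := by
    rw [hsum]
    exact (abs_sub _ _).trans (add_le_add_left (abs_add_three _ _ _) _)
  have hdadb : |da + db| ≤ ε * (1 + ε) ^ 4 * (A + B) := by
    have hgap : 0 ≤ ε * (ε ^ 2 * (5 + 4 * ε + ε ^ 2) * A +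
        ε * (3 + 3 * ε + 3 * ε ^ 2 + ε ^ 3) * B) := by positivity
    linear_combination htri + eda + edb + es + eb' + hgap
  calc |t| ≤ (1 + ε) * |da + db| := hR.abs_le ht
    _ ≤ (1 + ε) * (ε * (1 + ε) ^ 4 * (A + B)) := by gcongr
    _ = ε * (1 + ε) ^ 5 * (A + B) := by ring

theorem FastTwoSum.abs_snd_le (hR : HasRelError R ε) (hε : 0 ≤ ε) (h : FastTwoSum R a b s t) :
    |t| ≤ ε * (1 + ε) * (|b| + (1 + ε) * |a + b|) := by
  obtain ⟨hs, d, hd, ht⟩ := h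
  have es : |a + b - s| ≤ ε * |a + b| := by rw [abs_sub_comm]; exact hR hs
  have ed : |d - (s - a)| ≤ ε * (|b| + ε * |a + b|) :=
    hR.abs_sub_le_of_eq_sub hε hd (by ring) le_rfl es
  have hbd : |b - d| ≤ ε * |a + b| + ε * (|b| + ε * |a + b|) := by
    rw [show b - d = (a + b - s) - (d - (s - a)) by ring]
    exact (abs_sub _ _).trans (add_le_add es ed)
  calc |t| ≤ (1 + ε) * |b - d| := hR.abs_le ht
    _ ≤ (1 + ε) * (ε * |a + b| + ε * (|b| + ε * |a + b|)) := by gcongr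
    _ = ε * (1 + ε) * (|b| + (1 + ε) * |a + b|) := by ring

end StandardModel

section Cancellation

variable {x y ρ : ℝ}

lemma cancelRatio_nonneg : 0 ≤ cancelRatio x y := by
  unfold cancelRatio
  split_ifs <;> positivity

lemma min_abs_le_of_cancelRatio_le (h : cancelRatio x y ≤ ρ) (hxy : x * y < 0) :
    min |x| |y| ≤ ρ * max |x| |y| := by
  have hmax : 0 < max |x| |y| := lt_max_of_lt_left (abs_pos.mpr (left_ne_zero_of_mul hxy.ne))
  rwa [cancelRatio, if_pos hxy, div_le_iff₀ hmax] at h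

lemma max_abs_sub_min_abs_le_abs_add : max |x| |y| - min |x| |y| ≤ |x + y| := by
  simpa [max_sub_min_eq_abs, abs_sub_comm] using abs_abs_sub_abs_le x (-y)

lemma abs_add_abs_le_of_cancelRatio_le (h : cancelRatio x y ≤ ρ) :
    (1 - ρ) * (|x| + |y|) ≤ (1 + ρ) * |x + y| := by
  have hρ : 0 ≤ ρ := cancelRatio_nonneg.trans h
  rcases lt_or_ge (x * y) 0 with hxy | hxy
  · calc (1 - ρ) * (|x| + |y|)
        = (1 - ρ) * max |x| |y| + (1 - ρ) * min |x| |y| := by rw [← max_add_min]; ring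
      _ ≤ (1 + ρ) * (max |x| |y| - min |x| |y|) := by
        linarith [min_abs_le_of_cancelRatio_le h hxy]
      _ ≤ (1 + ρ) * |x + y| := by
        gcongr
        exact max_abs_sub_min_abs_le_abs_add
  · have hadd : |x + y| = |x| + |y| := abs_add_eq_add_abs_iff x y |>.mpr (mul_nonneg_iff.mp hxy)
    rw [hadd]
    gcongr
    linarith

end Cancellation

lemma abs_le_div_eight_of_overlap {u o h l : ℝ} (hu : 0 < u) (ho : o ≤ 1 / (8 * u))
    (hl : |l| ≤ o * u * |h|) : |l| ≤ |h| / 8 := by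
  calc |l| ≤ o * u * |h| := hl
    _ ≤ 1 / (8 * u) * u * |h| := by gcongr
    _ = |h| / 8 := by field_simp

theorem accurate_w_le_vh_of_mild_cancellation_general {R : ℝ → ℝ → Prop}
    (hR : HasRelError R (1 / 16)) {xh xl yh yl sh sl th tl c vh vl w : ℝ}
    (hx : |xl| ≤ |xh| / 8) (hy : |yl| ≤ |yh| / 8) (hr : cancelRatio xh yh ≤ 1 / 2)
    (hs : TwoSum R xh yh sh sl) (ht : TwoSum R xl yl th tl) (hc : R (sl + th) c)
    (hv : FastTwoSum R sh c vh vl) (hw : R (tl + vl) w) :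
    |w| ≤ |vh| := by
  have hε : (0 : ℝ) ≤ 1 / 16 := by norm_num
  set S := |xh + yh|
  set V := |sh + c|
  have hS : 0 ≤ S := abs_nonneg _
  have hsum : |xh| + |yh| ≤ 3 * S := by linarith [abs_add_abs_le_of_cancelRatio_le hr]
  have hmax : max |xh| |yh| ≤ 2 * S := by
    linarith [max_add_min |xh| |yh|, max_abs_sub_min_abs_le_abs_add (x := xh) (y := yh)]
  have hlow_sum : |xl + yl| ≤ 3 / 8 * S := by linarith [abs_add_le xl yl]
  have hlow_max : max |xl| |yl| ≤ S / 4 := by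
    obtain ⟨hxh, hyh⟩ := max_le_iff.mp hmax
    exact max_le (by linarith) (by linarith)
  have hsl : |sl| ≤ 51 / 200 * S := by linarith [hs.abs_snd_le hR hε]
  have htl : |tl| ≤ 27 / 500 * S := by linarith [ht.abs_snd_le hR hε]
  have hth : |th| ≤ 2 / 5 * S := by linarith [hR.abs_le ht.1]
  have hc_le : |c| ≤ 7 / 10 * S := by linarith [hR.abs_le hc, abs_add_le sl th]
  have hsh : 15 / 16 * S ≤ |sh| := by linarith [hR.le_abs hs.1]
  have hV : 23 / 100 * S ≤ V := by linarith [abs_sub_abs_le_abs_add sh c]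
  have hvl : |vl| ≤ 1 / 20 * S + 1 / 10 * V := by linarith [hv.abs_snd_le hR hε]
  calc |w| ≤ (1 + 1 / 16) * |tl + vl| := hR.abs_le hw
    _ ≤ (1 + 1 / 16) * (|tl| + |vl|) := by gcongr; exact abs_add_le tl vl
    _ ≤ (1 - 1 / 16) * V := by linarith
    _ ≤ |vh| := hR.le_abs hv.1

theorem accurate_w_le_vh_of_mild_cancellation
    (p : ℕ) (hp : 6 ≤ p) (u : ℝ) (hu : u = (2 : ℝ) ^ (1 - (p : ℤ)))
    (ox oy : ℝ) (hox1 : 1 ≤ ox) (hox2 : ox ≤ 1 / (8 * u) - 2)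
    (hoy1 : 1 ≤ oy) (hoy2 : oy ≤ 1 / (8 * u) - 2)
    (xh xl yh yl : ℝ)
    (hxh : xh ∈ Fp p) (hxl : xl ∈ Fp p) (hyh : yh ∈ Fp p) (hyl : yl ∈ Fp p)
    (hovx : |xl| ≤ ox * u * |xh|) (hovy : |yl| ≤ oy * u * |yh|)
    (hr : cancelRatio xh yh < 1 / 2)
    (sh a1 b1 da1 db1 sl th a2 b2 da2 db2 tl c vh d1 vl w zh d2 zl : ℝ)
    (hrun : AccurateFaithful p xh xl yh yl sh a1 b1 da1 db1 sl th a2 b2 da2 db2 tl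
      c vh d1 vl w zh d2 zl) :
    |w| ≤ |vh| := by
  have hu_pos : 0 < u := by
    rw [hu]
    positivity
  have hrel : HasRelError (Faithful p) (1 / 16) := by
    refine (hasRelError_faithful (by omega)).mono ?_
    calc (2 : ℝ) ^ (1 - (p : ℤ)) ≤ 2 ^ (-4 : ℤ) := zpow_le_zpow_right₀ one_le_two (by omega)
      _ = 1 / 16 := by norm_num
  obtain ⟨hsh, ha1, hb1, hda1, hdb1, hsl, hth, ha2, hb2, hda2, hdb2, htl, hc, hvh, hd1, hvl, hw,
    -⟩ := hrun
  exact accurate_w_le_vh_of_mild_cancellation_general hrel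
    (abs_le_div_eight_of_overlap hu_pos (by linarith) hovx)
    (abs_le_div_eight_of_overlap hu_pos (by linarith) hovy) hr.le
    ⟨hsh, a1, b1, da1, db1, ha1, hb1, hda1, hdb1, hsl⟩
    ⟨hth, a2, b2, da2, db2, ha2, hb2, hda2, hdb2, htl⟩ hc ⟨hvh, d1, hd1, hvl⟩ hw
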